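/- Let Ω ⊂ ℝ² be a bounded convex domain, G its Dirichlet Green function, and for k ≥ 2 and positive constants κ₁, …, κ_k define the Kirchhoff–Routh function W(x₁,…,x_k) = −Σ_{i≠j} κ_i κ_j G(x_i, x_j) + Σ_i κ_i² φ(x_i) on the set of k-tuples of distinct points of Ω, where φ(x) = H(x,x) is the Robin function. Then W has no critical point. -/

import Mathlib

open Real

noncomputable abbrev E2 := EuclideanSpace ℝ (Fin 2)

/-- The Laplacian in two variables. -/
noncomputable def lap (f : E2 → ℝ) (x : E2) : ℝ :=
  ∑ i : Fin 2,
    fderiv ℝ (fun z => fderiv ℝ f z (EuclideanSpace.single i 1)) x (EuclideanSpace.single i 1)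

/-! Move all vortices straight towards the one, `P`, with the least value of the Robin function `φ`;
to first order `W` strictly decreases. The tool is the Schwarz–Pick lemma for holomorphic maps
`q : Ω → Ω`, available because `exp (-2πG(·, b))` is the modulus of a Riemann map sending `b` to
`0`: it gives `G(q a, q b) ≥ G(a, b)` and `φ(q a) ≤ φ(a) - log |q' a| / 2π`. By convexity, convex
combinations of such maps with the identity again map `Ω` to itself.

* For a pair `(a, b)`, combine the identity with the affine map taking `(a, b)` to a point `p` near
  `(P, P)`: `G` does not decrease along the segment from `(a, b)` to `p`. As `dG ≠ 0` and `p` ranges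
  over a neighbourhood of `(P, P)`, the derivative of `G` towards `(P, P)` is positive.
* For a single vortex `a`, combine the identity with the conformal automorphism taking `a` to `P`.
  Normalized to be positive, its derivative at `a` is `exp (2π(φ(a) - φ(P))) ≥ 1`, so `φ ≤ φ(a)` on
  the segment from `a` to `P`. -/

section

open Set Filter Metric InnerProductSpace
open scoped Topology ComplexConjugate

section Calculus

variable {V : Type*} [NormedAddCommGroup V] [NormedSpace ℝ V]

theorem clm_apply_neg_of_eventually_nonpos {A : V →L[ℝ] ℝ} (hA : A ≠ 0) {v : V}
    (h : ∀ᶠ w in 𝓝 v, A w ≤ 0) : A v < 0 := by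
  refine h.self_of_nhds.lt_of_ne fun hv => hA ?_
  have hmax : IsLocalMax A v := h.mono fun w hw => hw.trans_eq hv.symm
  rw [← A.fderiv (x := v), hmax.fderiv_eq_zero]

theorem fderiv_sub_nonpos_of_isLocalMaxOn_segment {f : V → ℝ} {x y : V}
    (hf : DifferentiableAt ℝ f x) (h : IsLocalMaxOn f (segment ℝ x y) x) :
    fderiv ℝ f x (y - x) ≤ 0 :=
  h.hasFDerivWithinAt_nonpos hf.hasFDerivAt.hasFDerivWithinAt
    (sub_mem_posTangentConeAt_of_segment_subset subset_rfl)

theorem fderiv_log_norm_ne_zero {f : ℂ → ℂ} {f' z : ℂ} (hf : HasDerivAt f f' z) (hfz : f z ≠ 0)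
    (hf' : f' ≠ 0) : fderiv ℝ (fun w => Real.log ‖f w‖) z ≠ 0 := by
  have hlog := (hf.hasFDerivAt.restrictScalars ℝ).norm_sq.log (by simpa using hfz)
  have hhalf : (fun w => Real.log ‖f w‖) = fun w => (1 / 2 : ℝ) * Real.log (‖f w‖ ^ 2) := by
    funext w
    rw [Real.log_pow]
    push_cast
    ring
  rw [hhalf, (hlog.const_mul (1 / 2)).fderiv]
  intro h
  have h1 := congrArg (fun A : ℂ →L[ℝ] ℝ => A (f z / f')) h
  simp [hf', hfz] at h1

theorem hasDerivAt_invFunOn {U : Set ℂ} (hU : IsOpen U) {f : ℂ → ℂ}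
    (hf : DifferentiableOn ℂ f U) (hinj : InjOn f U) {z : ℂ} (hz : z ∈ U) (hfz : deriv f z ≠ 0) :
    HasDerivAt (Function.invFunOn f U) (deriv f z)⁻¹ (f z) :=
  ((hf.analyticAt (hU.mem_nhds hz)).hasStrictDerivAt.to_local_left_inverse hfz
    (by filter_upwards [hU.mem_nhds hz] with w hw using hinj.leftInvOn_invFunOn hw)).hasDerivAt

theorem norm_eq_norm_sub_mul_norm_dslope {𝕜 F : Type*} [NontriviallyNormedField 𝕜]
    [NormedAddCommGroup F] [NormedSpace 𝕜 F] {f : 𝕜 → F} {b : 𝕜} (hb : f b = 0) (z : 𝕜) :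
    ‖f z‖ = ‖z - b‖ * ‖dslope f b z‖ := by
  rw [← norm_smul, sub_smul_dslope, hb, sub_zero]

end Calculus

theorem norm_le_of_eventually_norm_le_frontier {X Y : Type*} [NormedAddCommGroup X]
    [NormedSpace ℂ X] [Nontrivial X] [NormedAddCommGroup Y] [NormedSpace ℂ Y] {U : Set X}
    (hU : IsOpen U) (hb : Bornology.IsBounded U) {f : X → Y} (hf : DifferentiableOn ℂ f U) {C : ℝ}
    (h : ∀ ζ ∈ frontier U, ∀ C' > C, ∀ᶠ z in 𝓝[U] ζ, ‖f z‖ ≤ C') {z : X} (hz : z ∈ U) :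
    ‖f z‖ ≤ C := by
  refine le_of_forall_gt_imp_ge_of_dense fun C' hC' => ?_
  by_contra! hzC
  let V : Set X := {w ∈ U | C' < ‖f w‖}
  have hVU : closure V ⊆ U := by
    intro ζ hζ
    by_contra hζU
    have hfr : ζ ∈ frontier U :=
      hU.frontier_eq ▸ ⟨closure_mono (sep_subset U _) hζ, hζU⟩
    obtain ⟨w, hwV, hw⟩ := ((mem_closure_iff_frequently.1 hζ).and_eventually
      (eventually_nhdsWithin_iff.1 (h ζ hfr C' hC'))).exists
    exact (hw hwV.1).not_gt hwV.2
  have hV : IsOpen V := hf.continuousOn.norm.isOpen_inter_preimage hU isOpen_Ioi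
  refine hzC.not_ge (Complex.norm_le_of_forall_mem_frontier_norm_le
    (hb.subset (sep_subset U _)) (hf.mono hVU).diffContOnCl (fun w hw => ?_)
    (subset_closure ⟨hz, hzC⟩))
  rw [hV.frontier_eq] at hw
  by_contra! hwC
  exact hw.2 ⟨hVU hw.1, hwC⟩

section Moebius

/-- The Möbius automorphism of the unit disc that sends `c` to `0`. -/
noncomputable def discMoebius (c w : ℂ) : ℂ := (w - c) / (1 - conj c * w)

@[simp] theorem discMoebius_self (c : ℂ) : discMoebius c c = 0 := by simp [discMoebius]

@[simp] theorem discMoebius_zero_left (w : ℂ) : discMoebius 0 w = w := by simp [discMoebius]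

@[simp] theorem discMoebius_zero_right (c : ℂ) : discMoebius c 0 = -c := by simp [discMoebius]

variable {c w : ℂ}

theorem one_sub_conj_mul_ne_zero (hc : ‖c‖ < 1) (hw : ‖w‖ ≤ 1) : 1 - conj c * w ≠ 0 := by
  refine sub_ne_zero.2 fun h => ?_
  have hlt : ‖conj c * w‖ < 1 := by
    rw [norm_mul, RCLike.norm_conj]
    exact mul_lt_one_of_nonneg_of_lt_one_left (norm_nonneg c) hc hw
  simp [← h] at hlt

theorem discMoebius_ne_zero (hc : ‖c‖ < 1) (hw : ‖w‖ ≤ 1) (h : w ≠ c) : discMoebius c w ≠ 0 :=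
  div_ne_zero (sub_ne_zero.2 h) (one_sub_conj_mul_ne_zero hc hw)

theorem norm_discMoebius_le_one (hc : ‖c‖ < 1) (hw : ‖w‖ ≤ 1) : ‖discMoebius c w‖ ≤ 1 := by
  rw [discMoebius, norm_div, div_le_one (norm_pos_iff.2 (one_sub_conj_mul_ne_zero hc hw))]
  have hid : ‖1 - conj c * w‖ ^ 2 - ‖w - c‖ ^ 2 = (1 - ‖c‖ ^ 2) * (1 - ‖w‖ ^ 2) := by
    simp only [← Complex.normSq_eq_norm_sq, Complex.normSq_apply, Complex.sub_re, Complex.sub_im,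
      Complex.mul_re, Complex.mul_im, Complex.conj_re, Complex.conj_im, Complex.one_re,
      Complex.one_im]
    ring
  have hpos : 0 ≤ (1 - ‖c‖ ^ 2) * (1 - ‖w‖ ^ 2) :=
    mul_nonneg (sub_nonneg.2 (pow_le_one₀ (norm_nonneg c) hc.le))
      (sub_nonneg.2 (pow_le_one₀ (norm_nonneg w) hw))
  exact le_of_sq_le_sq (by linarith) (norm_nonneg _)

theorem differentiableAt_discMoebius (hc : ‖c‖ < 1) (hw : ‖w‖ ≤ 1) :
    DifferentiableAt ℂ (discMoebius c) w :=
  (differentiableAt_id.sub_const c).div ((differentiableAt_id.const_mul (conj c)).const_sub 1)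
    (one_sub_conj_mul_ne_zero hc hw)

theorem differentiableAt_uncurry_discMoebius (hc : ‖c‖ < 1) (hw : ‖w‖ ≤ 1) :
    DifferentiableAt ℝ (fun p : ℂ × ℂ => discMoebius p.1 p.2) (c, w) := by
  have hconj : DifferentiableAt ℝ (fun p : ℂ × ℂ => conj p.1) (c, w) :=
    Complex.conjCLE.differentiableAt.comp (c, w) differentiableAt_fst
  have hden : DifferentiableAt ℝ (fun p : ℂ × ℂ => 1 - conj p.1 * p.2) (c, w) :=
    (hconj.mul differentiableAt_snd).const_sub 1
  simp only [discMoebius, div_eq_mul_inv]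
  exact (differentiableAt_snd.sub differentiableAt_fst).mul
    (hden.inv (one_sub_conj_mul_ne_zero hc hw))

theorem hasDerivAt_discMoebius_self (hc : ‖c‖ < 1) :
    HasDerivAt (discMoebius c) (1 - ‖c‖ ^ 2 : ℝ)⁻¹ c := by
  have hne := one_sub_conj_mul_ne_zero hc hc.le
  have hder := ((hasDerivAt_id c).sub_const c).div
    (((hasDerivAt_id c).const_mul (conj c)).const_sub 1) hne
  convert! hder using 1
  rw [Complex.conj_mul'] at hne
  simp only [id, sub_self, Complex.conj_mul']
  push_cast
  field_simp
  simp

end Moebius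

theorem exists_differentiableOn_re_eq_of_harmonicOnNhd {U : Set ℂ} (hU : IsOpen U)
    (hc : Convex ℝ U) {f : ℂ → ℝ} (hf : HarmonicOnNhd f U) :
    ∃ F : ℂ → ℂ, DifferentiableOn ℂ F U ∧ ∀ z ∈ U, (F z).re = f z := by
  rcases U.eq_empty_or_nonempty with rfl | ⟨z₀, hz₀⟩
  · exact ⟨0, by simp, by simp⟩
  let g : ℂ → ℂ := fun z => fderiv ℝ f z 1 - Complex.I * fderiv ℝ f z Complex.I
  have hg : DifferentiableOn ℂ g U := fun z hz =>
    (HarmonicAt.differentiableAt_complex_partial (hf z hz)).differentiableWithinAt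
  obtain ⟨F₀, hF₀⟩ := hc.exists_forall_hasDerivWithinAt hg
  let F : ℂ → ℂ := fun z => F₀ z + (f z₀ - F₀ z₀)
  have hF : ∀ z ∈ U, HasDerivAt F (g z) z := fun z hz =>
    ((hF₀ z hz).hasDerivAt (hU.mem_nhds hz)).add_const _
  have hre : ∀ z ∈ U, HasFDerivAt (fun w => (F w).re) (fderiv ℝ f z) z := by
    intro z hz
    have h := Complex.reCLM.hasFDerivAt.comp z ((hF z hz).hasFDerivAt.restrictScalars ℝ)
    convert! h using 1
    ext v
    rw [show v = v.re • (1 : ℂ) + v.im • Complex.I by simp, map_add, map_smul, map_smul]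
    simp [g]
  refine ⟨F, fun z hz => (hF z hz).differentiableAt.differentiableWithinAt, ?_⟩
  exact hU.eqOn_of_fderiv_eq hc.isPreconnected
    (fun z hz => (hre z hz).differentiableAt.differentiableWithinAt)
    (fun z hz => ((hf z hz).1.differentiableAt two_ne_zero).differentiableWithinAt)
    (fun z hz => (hre z hz).fderiv) hz₀ (by simp [F])

theorem exists_differentiableOn_norm_eq_exp_of_harmonicOnNhd {U : Set ℂ} (hU : IsOpen U)
    (hc : Convex ℝ U) {f : ℂ → ℝ} (hf : HarmonicOnNhd f U) :
    ∃ F : ℂ → ℂ, DifferentiableOn ℂ F U ∧ ∀ z ∈ U, ‖F z‖ = Real.exp (f z) := by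
  obtain ⟨F, hF, hre⟩ := exists_differentiableOn_re_eq_of_harmonicOnNhd hU hc hf
  exact ⟨fun z => Complex.exp (F z), hF.cexp, fun z hz => by rw [Complex.norm_exp, hre z hz]⟩

section Laplacian

theorem laplacian_comp_linearIsometryEquiv {X Y F : Type*} [NormedAddCommGroup X]
    [InnerProductSpace ℝ X] [FiniteDimensional ℝ X] [NormedAddCommGroup Y]
    [InnerProductSpace ℝ Y] [FiniteDimensional ℝ Y] [NormedAddCommGroup F] [NormedSpace ℝ F]
    (e : X ≃ₗᵢ[ℝ] Y) (f : Y → F) (x : X) :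
    Laplacian.laplacian (f ∘ e) x = Laplacian.laplacian f (e x) := by
  let b := stdOrthonormalBasis ℝ X
  have hcomp := e.toContinuousLinearEquiv.iteratedFDerivWithin_comp_right f uniqueDiffOn_univ
    (mem_univ (e x)) 2
  simp only [preimage_univ, iteratedFDerivWithin_univ] at hcomp
  rw [laplacian_eq_iteratedFDeriv_orthonormalBasis _ b,
    laplacian_eq_iteratedFDeriv_orthonormalBasis _ (b.map e)]
  refine Finset.sum_congr rfl fun i _ => ?_
  have happly := congrArg (fun A => A ![b i, b i]) hcomp
  simp only [ContinuousMultilinearMap.compContinuousLinearMap_apply] at happly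
  convert! happly using 2
  ext j
  fin_cases j <;> simp

theorem lap_eq_laplacian {f : E2 → ℝ} {x : E2} (hf : ContDiffAt ℝ 2 f x) :
    lap f x = Laplacian.laplacian f x := by
  have hd : DifferentiableAt ℝ (fderiv ℝ f) x :=
    (hf.fderiv_right (m := 1) (by norm_num)).differentiableAt one_ne_zero
  rw [laplacian_eq_iteratedFDeriv_orthonormalBasis _ (EuclideanSpace.basisFun (Fin 2) ℝ)]
  simp [lap, iteratedFDeriv_two_apply, fderiv_clm_apply hd (differentiableAt_const _)]

end Laplacian

section GreenSystem

/-- The map `z ↦ (z - b) * E b z`. When `E b` is the exponential of a holomorphic completion of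
`2π` times the regular part of a Green function with pole `b`, its modulus is `exp (-2πG)`, and it
is a Riemann map onto the unit disc that sends `b` to `0`. -/
noncomputable def greenMap (E : ℂ → ℂ → ℂ) (b z : ℂ) : ℂ := (z - b) * E b z

/-- The Green function of the bounded domain `U`, encoded multiplicatively: `E b` is zero-free and
holomorphic, and `‖greenMap E b ·‖`, which stands for `exp (-2πG(·, b))`, tends to `1` at the
boundary. -/
structure GreenSystem (U : Set ℂ) (E : ℂ → ℂ → ℂ) : Prop where
  isOpen : IsOpen U
  isBounded : Bornology.IsBounded U
  isPreconnected : IsPreconnected U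
  differentiableOn {b : ℂ} : b ∈ U → DifferentiableOn ℂ (E b) U
  ne_zero {b z : ℂ} : b ∈ U → z ∈ U → E b z ≠ 0
  tendsto_frontier {b ζ : ℂ} : b ∈ U → ζ ∈ frontier U →
    Tendsto (fun z => ‖greenMap E b z‖) (𝓝[U] ζ) (𝓝 1)

theorem greenMap_self (E : ℂ → ℂ → ℂ) (b : ℂ) : greenMap E b b = 0 := by simp [greenMap]

namespace GreenSystem

variable {U : Set ℂ} {E : ℂ → ℂ → ℂ} {a b z P : ℂ}

theorem differentiableOn_greenMap (S : GreenSystem U E) (hb : b ∈ U) :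
    DifferentiableOn ℂ (greenMap E b) U :=
  (differentiableOn_id.sub_const b).mul (S.differentiableOn hb)

theorem hasDerivAt_greenMap (S : GreenSystem U E) (hb : b ∈ U) (hz : z ∈ U) :
    HasDerivAt (greenMap E b) (deriv (greenMap E b) z) z :=
  ((S.differentiableOn_greenMap hb).differentiableAt (S.isOpen.mem_nhds hz)).hasDerivAt

theorem hasDerivAt_greenMap_self (S : GreenSystem U E) (hb : b ∈ U) :
    HasDerivAt (greenMap E b) (E b b) b := by
  have h := ((hasDerivAt_id b).sub_const b).mul
    ((S.differentiableOn hb).differentiableAt (S.isOpen.mem_nhds hb)).hasDerivAt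
  simpa using! h

theorem dslope_greenMap_self (S : GreenSystem U E) (hb : b ∈ U) (z : ℂ) :
    dslope (greenMap E b) b z = E b z := by
  rcases eq_or_ne z b with rfl | hzb
  · rw [dslope_same, (S.hasDerivAt_greenMap_self hb).deriv]
  · rw [dslope_of_ne _ hzb, slope_def_field, greenMap_self, sub_zero, greenMap,
      mul_div_cancel_left₀ _ (sub_ne_zero.2 hzb)]

theorem greenMap_ne_zero (S : GreenSystem U E) (hb : b ∈ U) (hz : z ∈ U) (h : z ≠ b) :
    greenMap E b z ≠ 0 :=
  mul_ne_zero (sub_ne_zero.2 h) (S.ne_zero hb hz)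

theorem norm_greenMap_lt_one (S : GreenSystem U E) (hb : b ∈ U) (hz : z ∈ U) :
    ‖greenMap E b z‖ < 1 := by
  have hle : ∀ w ∈ U, ‖greenMap E b w‖ ≤ 1 := fun w hw =>
    norm_le_of_eventually_norm_le_frontier S.isOpen S.isBounded (S.differentiableOn_greenMap hb)
      (fun ζ hζ _ hC => (S.tendsto_frontier hb hζ).eventually_le_const hC) hw
  refine (hle z hz).lt_of_ne fun h => ?_
  have hconst := Complex.norm_eqOn_of_isPreconnected_of_isMaxOn S.isPreconnected S.isOpen
    (S.differentiableOn_greenMap hb) hz (fun w hw => (hle w hw).trans_eq h.symm) hb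
  simp [greenMap_self, h] at hconst

section Schwarz

variable {k : ℂ → ℂ}

theorem norm_dslope_div_le_one (S : GreenSystem U E) (hb : b ∈ U) (hk : DifferentiableOn ℂ k U)
    (hk1 : ∀ z ∈ U, ‖k z‖ ≤ 1) (hkb : k b = 0) (hz : z ∈ U) :
    ‖dslope k b z / E b z‖ ≤ 1 := by
  have hmul : ∀ w ∈ U, greenMap E b w * (dslope k b w / E b w) = k w := by
    intro w hw
    have hE := S.ne_zero hb hw
    rw [← sub_zero (k w), ← hkb, ← sub_smul_dslope k b w, smul_eq_mul, greenMap]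
    field_simp
  refine norm_le_of_eventually_norm_le_frontier S.isOpen S.isBounded
    (((Complex.differentiableOn_dslope (S.isOpen.mem_nhds hb)).2 hk).div (S.differentiableOn hb)
      fun w hw => S.ne_zero hb hw) (fun ζ hζ C hC => ?_) hz
  have ht := S.tendsto_frontier hb hζ
  filter_upwards [self_mem_nhdsWithin, ht.eventually_const_lt one_pos,
    (ht.inv₀ one_ne_zero).eventually_le_const (inv_one.trans_lt hC)] with w hw hpos hinv
  calc ‖dslope k b w / E b w‖ = ‖k w‖ / ‖greenMap E b w‖ := by
        rw [← hmul w hw, norm_mul, mul_div_cancel_left₀ _ hpos.ne']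
    _ ≤ ‖greenMap E b w‖⁻¹ := by
        rw [← one_div]; exact div_le_div_of_nonneg_right (hk1 w hw) hpos.le
    _ ≤ C := hinv

theorem norm_dslope_le (S : GreenSystem U E) (hb : b ∈ U) (hk : DifferentiableOn ℂ k U)
    (hk1 : ∀ z ∈ U, ‖k z‖ ≤ 1) (hkb : k b = 0) (hz : z ∈ U) : ‖dslope k b z‖ ≤ ‖E b z‖ := by
  have h := S.norm_dslope_div_le_one hb hk hk1 hkb hz
  rwa [norm_div, div_le_one (norm_pos_iff.2 (S.ne_zero hb hz))] at h

theorem norm_le_norm_greenMap (S : GreenSystem U E) (hb : b ∈ U) (hk : DifferentiableOn ℂ k U)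
    (hk1 : ∀ z ∈ U, ‖k z‖ ≤ 1) (hkb : k b = 0) (hz : z ∈ U) : ‖k z‖ ≤ ‖greenMap E b z‖ := by
  rw [norm_eq_norm_sub_mul_norm_dslope hkb, greenMap, norm_mul]
  exact mul_le_mul_of_nonneg_left (S.norm_dslope_le hb hk hk1 hkb hz) (norm_nonneg _)

theorem norm_dslope_eq_of_norm_dslope_eq (S : GreenSystem U E) (ha : a ∈ U) (hb : b ∈ U)
    (hk : DifferentiableOn ℂ k U) (hk1 : ∀ z ∈ U, ‖k z‖ ≤ 1) (hkb : k b = 0)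
    (h : ‖dslope k b a‖ = ‖E b a‖) (hz : z ∈ U) : ‖dslope k b z‖ = ‖E b z‖ := by
  have hone : ‖dslope k b a / E b a‖ = 1 := by
    rw [norm_div, h, div_self (norm_ne_zero_iff.2 (S.ne_zero hb ha))]
  have hconst := Complex.norm_eqOn_of_isPreconnected_of_isMaxOn S.isPreconnected S.isOpen
    (((Complex.differentiableOn_dslope (S.isOpen.mem_nhds hb)).2 hk).div (S.differentiableOn hb)
      fun w hw => S.ne_zero hb hw) ha
    (fun w hw => (S.norm_dslope_div_le_one hb hk hk1 hkb hw).trans_eq hone.symm) hz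
  have hzone : ‖dslope k b z / E b z‖ = 1 := hconst.trans hone
  rwa [norm_div, div_eq_one_iff_eq (norm_ne_zero_iff.2 (S.ne_zero hb hz))] at hzone

end Schwarz

theorem differentiableOn_discMoebius_greenMap (S : GreenSystem U E) (ha : a ∈ U) (hb : b ∈ U) :
    DifferentiableOn ℂ (fun z => discMoebius (greenMap E a b) (greenMap E a z)) U := fun z hz =>
  (DifferentiableAt.fun_comp' z
    (differentiableAt_discMoebius (S.norm_greenMap_lt_one ha hb) (S.norm_greenMap_lt_one ha hz).le)
    (S.hasDerivAt_greenMap ha hz).differentiableAt).differentiableWithinAt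

theorem norm_greenMap_comm (S : GreenSystem U E) (ha : a ∈ U) (hb : b ∈ U) :
    ‖greenMap E a b‖ = ‖greenMap E b a‖ := by
  suffices hle : ∀ c ∈ U, ∀ d ∈ U, ‖greenMap E c d‖ ≤ ‖greenMap E d c‖ from
    (hle a ha b hb).antisymm (hle b hb a ha)
  intro c hc d hd
  have h := S.norm_le_norm_greenMap hd (S.differentiableOn_discMoebius_greenMap hc hd)
    (fun z hz => norm_discMoebius_le_one (S.norm_greenMap_lt_one hc hd)
      (S.norm_greenMap_lt_one hc hz).le) (discMoebius_self _) hc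
  rwa [greenMap_self, discMoebius_zero_right, norm_neg] at h

-- Symmetry of the Green function is equality at the point `a` in the Schwarz lemma.
theorem norm_dslope_discMoebius_greenMap (S : GreenSystem U E) (ha : a ∈ U) (hb : b ∈ U)
    (hz : z ∈ U) :
    ‖dslope (fun w => discMoebius (greenMap E a b) (greenMap E a w)) b z‖ = ‖E b z‖ := by
  refine S.norm_dslope_eq_of_norm_dslope_eq ha hb
    (S.differentiableOn_discMoebius_greenMap ha hb)
    (fun z hz => norm_discMoebius_le_one (S.norm_greenMap_lt_one ha hb)
      (S.norm_greenMap_lt_one ha hz).le) (discMoebius_self _) ?_ hz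
  rcases eq_or_ne a b with rfl | hab
  · simp only [greenMap_self, discMoebius_zero_left]
    exact congrArg _ (S.dslope_greenMap_self ha a)
  · rw [dslope_of_ne _ hab, slope_def_field, discMoebius_self, greenMap_self,
      discMoebius_zero_right, sub_zero, norm_div, norm_neg, S.norm_greenMap_comm ha hb, greenMap,
      norm_mul, mul_div_cancel_left₀ _ (norm_ne_zero_iff.2 (sub_ne_zero.2 hab))]

theorem norm_discMoebius_greenMap (S : GreenSystem U E) (ha : a ∈ U) (hb : b ∈ U) (hz : z ∈ U) :
    ‖discMoebius (greenMap E a b) (greenMap E a z)‖ = ‖greenMap E b z‖ := by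
  rw [norm_eq_norm_sub_mul_norm_dslope
      (f := fun w => discMoebius (greenMap E a b) (greenMap E a w)) (discMoebius_self _) z,
    S.norm_dslope_discMoebius_greenMap ha hb hz, greenMap, norm_mul]

theorem norm_apply_self_eq (S : GreenSystem U E) (ha : a ∈ U) (hb : b ∈ U) :
    ‖E b b‖ = ‖deriv (greenMap E a) b‖ / (1 - ‖greenMap E a b‖ ^ 2) := by
  have hpos : 0 ≤ 1 - ‖greenMap E a b‖ ^ 2 :=
    sub_nonneg.2 (pow_le_one₀ (norm_nonneg _) (S.norm_greenMap_lt_one ha hb).le)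
  have hder := (hasDerivAt_discMoebius_self (S.norm_greenMap_lt_one ha hb)).comp b
    (S.hasDerivAt_greenMap ha hb)
  rw [← S.norm_dslope_discMoebius_greenMap ha hb hb, dslope_same]
  change ‖deriv (discMoebius (greenMap E a b) ∘ greenMap E a) b‖ = _
  rw [hder.deriv, norm_mul, ← Complex.ofReal_inv, Complex.norm_of_nonneg (inv_nonneg.2 hpos),
    inv_mul_eq_div]

theorem deriv_greenMap_ne_zero (S : GreenSystem U E) (ha : a ∈ U) (hz : z ∈ U) :
    deriv (greenMap E a) z ≠ 0 := fun h =>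
  S.ne_zero hz hz (by simpa [h] using S.norm_apply_self_eq ha hz)

theorem injOn_greenMap (S : GreenSystem U E) (ha : a ∈ U) : InjOn (greenMap E a) U := by
  intro z hz w hw h
  by_contra hne
  apply S.greenMap_ne_zero hw hz hne
  rw [← norm_eq_zero, ← S.norm_discMoebius_greenMap ha hw hz, h, discMoebius_self, norm_zero]

theorem isOpen_image_greenMap (S : GreenSystem U E) (ha : a ∈ U) : IsOpen (greenMap E a '' U) := by
  rw [isOpen_iff_mem_nhds]
  rintro _ ⟨z, hz, rfl⟩
  have hstrict := ((S.differentiableOn_greenMap ha).analyticAt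
    (S.isOpen.mem_nhds hz)).hasStrictDerivAt
  rw [← hstrict.map_nhds_eq (S.deriv_greenMap_ne_zero ha hz)]
  exact image_mem_map (S.isOpen.mem_nhds hz)

-- Near the boundary `‖greenMap E a ·‖` is close to `1`, so preimages of `w` cannot escape there.
theorem mem_image_greenMap_of_mem_closure (S : GreenSystem U E) (ha : a ∈ U) {w : ℂ}
    (hw : w ∈ closure (greenMap E a '' U)) (hw1 : ‖w‖ < 1) : w ∈ greenMap E a '' U := by
  obtain ⟨v, hvU, hv⟩ := mem_closure_iff_seq_limit.1 hw
  choose z hzU hz using hvU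
  obtain ⟨ζ, hζ, φ, hφ, hzζ⟩ :=
    S.isBounded.isCompact_closure.tendsto_subseq fun n => subset_closure (hzU n)
  have hF : Tendsto (fun n => greenMap E a (z (φ n))) atTop (𝓝 w) := by
    simpa only [hz, Function.comp_def] using hv.comp hφ.tendsto_atTop
  by_cases hζU : ζ ∈ U
  · exact ⟨ζ, hζU, tendsto_nhds_unique
      ((S.hasDerivAt_greenMap ha hζU).continuousAt.tendsto.comp hzζ) hF⟩
  · have hone := (S.tendsto_frontier ha (S.isOpen.frontier_eq ▸ ⟨hζ, hζU⟩)).comp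
      (tendsto_nhdsWithin_iff.2 ⟨hzζ, Eventually.of_forall fun n => hzU (φ n)⟩)
    exact absurd (tendsto_nhds_unique hF.norm hone) hw1.ne

theorem surjOn_greenMap (S : GreenSystem U E) (ha : a ∈ U) :
    SurjOn (greenMap E a) U (ball 0 1) :=
  (convex_ball (0 : ℂ) 1).isPreconnected.subset_of_closure_inter_subset
    (S.isOpen_image_greenMap ha) ⟨0, by simp, a, ha, greenMap_self E a⟩
    fun _ hw => S.mem_image_greenMap_of_mem_closure ha hw.1 (mem_ball_zero_iff.1 hw.2)

section SchwarzPick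

variable {q : ℂ → ℂ}

theorem norm_greenMap_map_le (S : GreenSystem U E) (hq : DifferentiableOn ℂ q U)
    (hqU : MapsTo q U U) (ha : a ∈ U) (hb : b ∈ U) :
    ‖greenMap E (q b) (q a)‖ ≤ ‖greenMap E b a‖ :=
  S.norm_le_norm_greenMap hb ((S.differentiableOn_greenMap (hqU hb)).comp hq hqU)
    (fun _ hz => (S.norm_greenMap_lt_one (hqU hb) (hqU hz)).le) (greenMap_self E (q b)) ha

theorem norm_apply_map_mul_norm_deriv_le (S : GreenSystem U E) (hq : DifferentiableOn ℂ q U)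
    (hqU : MapsTo q U U) (hb : b ∈ U) : ‖E (q b) (q b)‖ * ‖deriv q b‖ ≤ ‖E b b‖ := by
  have hder := (S.hasDerivAt_greenMap_self (hqU hb)).comp b
    (hq.differentiableAt (S.isOpen.mem_nhds hb)).hasDerivAt
  rw [← norm_mul, ← hder.deriv, ← dslope_same]
  exact S.norm_dslope_le hb ((S.differentiableOn_greenMap (hqU hb)).comp hq hqU)
    (fun _ hz => (S.norm_greenMap_lt_one (hqU hb) (hqU hz)).le) (greenMap_self E (q b)) hb

end SchwarzPick

theorem exists_mapsTo_self_hasDerivAt (S : GreenSystem U E) (ha : a ∈ U) (hP : P ∈ U) :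
    ∃ q : ℂ → ℂ, DifferentiableOn ℂ q U ∧ MapsTo q U U ∧ q a = P ∧
      HasDerivAt q (‖E a a‖ / ‖E P P‖ : ℝ) a := by
  have hEa := S.ne_zero ha ha
  have hEP := S.ne_zero hP hP
  have hEa' : (‖E a a‖ : ℂ) ≠ 0 := by simpa using hEa
  have hEP' : (‖E P P‖ : ℂ) ≠ 0 := by simpa using hEP
  let g := Function.invFunOn (greenMap E P) U
  -- The rotation by `c` makes the derivative at `a` of the composed Riemann maps positive.
  let c : ℂ := ‖E a a‖ / ‖E P P‖ * (E P P / E a a)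
  have hc : ‖c‖ = 1 := by
    simp only [c, norm_mul, norm_div, Complex.norm_real, norm_norm]
    field_simp
  have hball : ∀ z ∈ U, c * greenMap E a z ∈ greenMap E P '' U := fun z hz =>
    S.surjOn_greenMap hP (by simpa [hc] using S.norm_greenMap_lt_one ha hz)
  have hg : ∀ w ∈ U, HasDerivAt g (deriv (greenMap E P) w)⁻¹ (greenMap E P w) := fun w hw =>
    hasDerivAt_invFunOn S.isOpen (S.differentiableOn_greenMap hP) (S.injOn_greenMap hP) hw
      (S.deriv_greenMap_ne_zero hP hw)
  have hleft : g (c * greenMap E a a) = P := by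
    rw [greenMap_self, mul_zero, ← greenMap_self E P]
    exact (S.injOn_greenMap hP).leftInvOn_invFunOn hP
  refine ⟨fun z => g (c * greenMap E a z), fun z hz => ?_,
    fun z hz => Function.invFunOn_mem (hball z hz), hleft, ?_⟩
  · obtain ⟨w, hw, hwz⟩ := hball z hz
    exact (DifferentiableAt.fun_comp' z (hwz ▸ (hg w hw).differentiableAt)
      ((S.hasDerivAt_greenMap ha hz).differentiableAt.const_mul c)).differentiableWithinAt
  · have hgP := hg P hP
    rw [(S.hasDerivAt_greenMap_self hP).deriv] at hgP
    have hcomp := HasDerivAt.comp_of_eq a hgP ((S.hasDerivAt_greenMap_self ha).const_mul c)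
      (by simp [greenMap_self])
    convert! hcomp using 1
    simp only [c]
    push_cast
    field_simp

section Convex

theorem norm_apply_self_le_of_mem_segment (S : GreenSystem U E) (hU : Convex ℝ U) (ha : a ∈ U)
    (hP : P ∈ U) (h : ‖E P P‖ ≤ ‖E a a‖) (hz : z ∈ segment ℝ a P) : ‖E z z‖ ≤ ‖E a a‖ := by
  obtain ⟨q, hq, hqU, hqa, hder⟩ := S.exists_mapsTo_self_hasDerivAt ha hP
  obtain ⟨s, t, hs, ht, hst, rfl⟩ := hz
  let ρ := ‖E a a‖ / ‖E P P‖
  have hρ : 1 ≤ ρ := (one_le_div (norm_pos_iff.2 (S.ne_zero hP hP))).2 h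
  have hmix : HasDerivAt (fun z => s • z + t • q z) (s + t * ρ : ℝ) a := by
    convert! ((hasDerivAt_id a).const_smul s).add (hder.const_smul t) using 1
    simp [ρ]
  have hle := S.norm_apply_map_mul_norm_deriv_le
    (q := fun z => s • z + t • q z) ((differentiableOn_id.const_smul s).add (hq.const_smul t))
    (fun _ hz => hU hz (hqU hz) hs ht hst) ha
  rw [hmix.deriv, Complex.norm_real, hqa] at hle
  refine (le_mul_of_one_le_right (norm_nonneg _) (le_trans ?_ (le_abs_self _))).trans hle
  linarith [le_mul_of_one_le_right ht hρ]

-- The affine map `T p` takes `(a, b)` to `p`. For `p` near `(P, P)` it almost collapses `U` to `P`,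
-- hence maps `U` into itself.
theorem eventually_norm_greenMap_le_on_segment (S : GreenSystem U E) (hU : Convex ℝ U)
    (ha : a ∈ U) (hb : b ∈ U) (hab : a ≠ b) (hP : P ∈ U) :
    ∀ᶠ p : ℂ × ℂ in 𝓝 (P, P), ∀ w ∈ segment ℝ (a, b) p,
      ‖greenMap E w.2 w.1‖ ≤ ‖greenMap E b a‖ := by
  let T : ℂ × ℂ → ℂ → ℂ := fun p z => p.2 + (p.1 - p.2) / (a - b) * (z - b)
  have hT : Continuous fun x : (ℂ × ℂ) × ℂ => T x.1 x.2 := by fun_prop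
  have hTU : ∀ᶠ p in 𝓝 (P, P), ∀ z ∈ closure U, T p z ∈ U :=
    S.isBounded.isCompact_closure.eventually_forall_of_forall_eventually fun z _ =>
      hT.continuousAt.eventually_mem (S.isOpen.mem_nhds (by simpa [T] using hP))
  filter_upwards [hTU] with p hp
  rintro _ ⟨s, t, hs, ht, hst, rfl⟩
  have hTa : T p a = p.1 := by simp [T, div_mul_cancel₀ _ (sub_ne_zero.2 hab)]
  have hTb : T p b = p.2 := by simp [T]
  have hle := S.norm_greenMap_map_le (q := fun z => s • z + t • T p z) (by fun_prop)
    (fun z hz => hU hz (hp z (subset_closure hz)) hs ht hst) ha hb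
  rwa [hTa, hTb] at hle

end Convex

theorem differentiableAt_log_norm_greenMap (S : GreenSystem U E) (ha : a ∈ U) (hb : b ∈ U)
    (hab : a ≠ b) :
    DifferentiableAt ℝ (fun p : ℂ × ℂ => Real.log ‖greenMap E p.2 p.1‖) (a, b) := by
  have ha1 := S.norm_greenMap_lt_one ha ha
  have hb1 := S.norm_greenMap_lt_one ha hb
  have hd : ∀ z ∈ U, DifferentiableAt ℝ (greenMap E a) z := fun z hz =>
    (S.hasDerivAt_greenMap ha hz).differentiableAt.restrictScalars ℝ
  have hpair : DifferentiableAt ℝ (fun p : ℂ × ℂ => (greenMap E a p.2, greenMap E a p.1)) (a, b) :=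
    (DifferentiableAt.fun_comp' (g := greenMap E a) (a, b) (hd b hb) differentiableAt_snd).prodMk
      (DifferentiableAt.fun_comp' (g := greenMap E a) (a, b) (hd a ha) differentiableAt_fst)
  have hmoebius : DifferentiableAt ℝ
      (fun p : ℂ × ℂ => discMoebius (greenMap E a p.2) (greenMap E a p.1)) (a, b) :=
    (differentiableAt_uncurry_discMoebius hb1 ha1.le).fun_comp' (a, b) hpair
  have hne : discMoebius (greenMap E a b) (greenMap E a a) ≠ 0 :=
    discMoebius_ne_zero hb1 ha1.le ((S.injOn_greenMap ha).ne ha hb hab)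
  refine ((hmoebius.norm ℝ hne).log (norm_ne_zero_iff.2 hne)).congr_of_eventuallyEq ?_
  filter_upwards [prod_mem_nhds (S.isOpen.mem_nhds ha) (S.isOpen.mem_nhds hb)] with p hp
  rw [S.norm_discMoebius_greenMap ha hp.2 hp.1]

theorem differentiableAt_log_norm_apply_self (S : GreenSystem U E) (ha : a ∈ U) :
    DifferentiableAt ℝ (fun x => Real.log ‖E x x‖) a := by
  have hd : DifferentiableAt ℝ (greenMap E a) a :=
    (S.hasDerivAt_greenMap ha ha).differentiableAt.restrictScalars ℝ
  have hd' : DifferentiableAt ℝ (deriv (greenMap E a)) a :=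
    (((S.differentiableOn_greenMap ha).deriv S.isOpen).differentiableAt
      (S.isOpen.mem_nhds ha)).restrictScalars ℝ
  have hne := S.deriv_greenMap_ne_zero ha ha
  have hden : 1 - ‖greenMap E a a‖ ^ 2 ≠ 0 := by simp [greenMap_self]
  have hquot : DifferentiableAt ℝ
      (fun x => ‖deriv (greenMap E a) x‖ / (1 - ‖greenMap E a x‖ ^ 2)) a := by
    simp only [div_eq_mul_inv]
    exact (hd'.norm ℝ hne).mul (((hd.norm_sq ℝ).const_sub 1).inv hden)
  refine (hquot.log (div_ne_zero (norm_ne_zero_iff.2 hne) hden)).congr_of_eventuallyEq ?_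
  filter_upwards [S.isOpen.mem_nhds ha] with x hx
  rw [S.norm_apply_self_eq ha hx]

theorem fderiv_log_norm_apply_self_nonpos (S : GreenSystem U E) (hU : Convex ℝ U) (ha : a ∈ U)
    (hP : P ∈ U) (h : ‖E P P‖ ≤ ‖E a a‖) :
    fderiv ℝ (fun x => Real.log ‖E x x‖) a (P - a) ≤ 0 := by
  refine fderiv_sub_nonpos_of_isLocalMaxOn_segment (S.differentiableAt_log_norm_apply_self ha)
    (eventually_nhdsWithin_of_forall fun z hz => ?_)
  have hzU := hU.segment_subset ha hP hz
  exact Real.log_le_log (norm_pos_iff.2 (S.ne_zero hzU hzU))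
    (S.norm_apply_self_le_of_mem_segment hU ha hP h hz)

theorem fderiv_log_norm_greenMap_ne_zero (S : GreenSystem U E) (ha : a ∈ U) (hb : b ∈ U)
    (hab : a ≠ b) : fderiv ℝ (fun p : ℂ × ℂ => Real.log ‖greenMap E p.2 p.1‖) (a, b) ≠ 0 := by
  intro h
  have hcomp := (S.differentiableAt_log_norm_greenMap ha hb hab).hasFDerivAt.comp a
    (hasFDerivAt_prodMk_left (𝕜 := ℝ) a b)
  rw [h, ContinuousLinearMap.zero_comp] at hcomp
  exact fderiv_log_norm_ne_zero (S.hasDerivAt_greenMap hb ha) (S.greenMap_ne_zero hb ha hab)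
    (S.deriv_greenMap_ne_zero hb ha) hcomp.fderiv

theorem eventually_fderiv_log_norm_greenMap_nonpos (S : GreenSystem U E) (hU : Convex ℝ U)
    (ha : a ∈ U) (hb : b ∈ U) (hab : a ≠ b) (hP : P ∈ U) :
    ∀ᶠ v in 𝓝 ((P, P) - (a, b)),
      fderiv ℝ (fun p : ℂ × ℂ => Real.log ‖greenMap E p.2 p.1‖) (a, b) v ≤ 0 := by
  have hne : ∀ᶠ p : ℂ × ℂ in 𝓝 (a, b), greenMap E p.2 p.1 ≠ 0 := by
    filter_upwards [prod_mem_nhds (S.isOpen.mem_nhds ha) (S.isOpen.mem_nhds hb),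
      (isOpen_ne_fun continuous_fst continuous_snd).mem_nhds hab] with p hp hne
    exact S.greenMap_ne_zero hp.2 hp.1 hne
  have hle := S.eventually_norm_greenMap_le_on_segment hU ha hb hab hP
  have hshift : Tendsto (fun v : ℂ × ℂ => (a, b) + v) (𝓝 ((P, P) - (a, b))) (𝓝 (P, P)) :=
    Continuous.tendsto' (by fun_prop) _ _ (by simp)
  filter_upwards [hshift.eventually hle] with v hv
  have h := fderiv_sub_nonpos_of_isLocalMaxOn_segment (y := (a, b) + v)
    (S.differentiableAt_log_norm_greenMap ha hb hab) ?_
  · rwa [add_sub_cancel_left] at h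
  · filter_upwards [self_mem_nhdsWithin, nhdsWithin_le_nhds hne] with w hw hw0
    exact Real.log_le_log (norm_pos_iff.2 hw0) (hv w hw)

theorem fderiv_log_norm_greenMap_neg (S : GreenSystem U E) (hU : Convex ℝ U) (ha : a ∈ U)
    (hb : b ∈ U) (hab : a ≠ b) (hP : P ∈ U) :
    fderiv ℝ (fun p : ℂ × ℂ => Real.log ‖greenMap E p.2 p.1‖) (a, b) (P - a, P - b) < 0 :=
  clm_apply_neg_of_eventually_nonpos (S.fderiv_log_norm_greenMap_ne_zero ha hb hab)
    (S.eventually_fderiv_log_norm_greenMap_nonpos hU ha hb hab hP)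

end GreenSystem

end GreenSystem

section GreenFunction

variable {Ω : Set E2} {H : E2 → E2 → ℝ}

/-- `H` is the regular part of the Dirichlet Green function of `Ω`: each `H · x'` is harmonic in
`Ω`, continuous up to the boundary, and makes the Green function vanish there. -/
def IsGreenRegularPart (Ω : Set E2) (H : E2 → E2 → ℝ) : Prop :=
  ∀ x' ∈ Ω, ContDiffOn ℝ 2 (fun y => H y x') Ω ∧
    (∀ y ∈ Ω, lap (fun y => H y x') y = 0) ∧
    ContinuousOn (fun y => H y x') (closure Ω) ∧
    (∀ y ∈ frontier Ω, H y x' = (1 / (2 * π)) * Real.log (1 / ‖y - x'‖))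

/-- The Green function with regular part `H`, on the diagonal carrying the junk value `-H x x`. -/
noncomputable def greenOfRegularPart (H : E2 → E2 → ℝ) (x x' : E2) : ℝ :=
  (1 / (2 * π)) * Real.log (1 / ‖x - x'‖) - H x x'

/-- The identification of `ℂ` with the Euclidean plane, used to bring in holomorphic functions. -/
noncomputable def planeEquiv : ℂ ≃ₗᵢ[ℝ] E2 := Complex.orthonormalBasisOneI.repr

theorem convex_preimage_planeEquiv (hc : Convex ℝ Ω) : Convex ℝ (planeEquiv ⁻¹' Ω) :=
  hc.linear_preimage planeEquiv.toLinearEquiv.toLinearMap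

theorem harmonicOnNhd_comp_planeEquiv (hΩ : IsOpen Ω) {f : E2 → ℝ} (hf : ContDiffOn ℝ 2 f Ω)
    (hlap : ∀ y ∈ Ω, lap f y = 0) : HarmonicOnNhd (f ∘ planeEquiv) (planeEquiv ⁻¹' Ω) := by
  intro z hz
  have hcd : ∀ y ∈ Ω, ContDiffAt ℝ 2 f y := fun y hy => hf.contDiffAt (hΩ.mem_nhds hy)
  refine ⟨(hcd _ hz).comp z planeEquiv.contDiff.contDiffAt, ?_⟩
  filter_upwards [(hΩ.preimage planeEquiv.continuous).mem_nhds hz] with w hw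
  rw [laplacian_comp_linearIsometryEquiv, ← lap_eq_laplacian (hcd _ hw), hlap _ hw, Pi.zero_apply]

theorem greenOfRegularPart_planeEquiv {E : ℂ → ℂ → ℂ} {a b : ℂ} (hab : a ≠ b)
    (hE : ‖E b a‖ = Real.exp (2 * π * H (planeEquiv a) (planeEquiv b))) :
    greenOfRegularPart H (planeEquiv a) (planeEquiv b) =
      -(1 / (2 * π)) * Real.log ‖greenMap E b a‖ := by
  have hne : ‖a - b‖ ≠ 0 := norm_ne_zero_iff.2 (sub_ne_zero.2 hab)
  rw [greenOfRegularPart, greenMap, norm_mul, hE, Real.log_mul hne (Real.exp_ne_zero _),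
    Real.log_exp, ← map_sub, planeEquiv.norm_map, one_div ‖a - b‖, Real.log_inv]
  field_simp
  ring

namespace IsGreenRegularPart

theorem tendsto_norm_sub_mul_exp (hH : IsGreenRegularPart Ω H) (hΩ : IsOpen Ω) {x' ζ : E2}
    (hx' : x' ∈ Ω) (hζ : ζ ∈ frontier Ω) :
    Tendsto (fun y => ‖y - x'‖ * Real.exp (2 * π * H y x')) (𝓝[Ω] ζ) (𝓝 1) := by
  obtain ⟨-, -, hcont, hbdry⟩ := hH x' hx'
  have hζx' : 0 < ‖ζ - x'‖ :=
    norm_sub_pos_iff.2 fun h => (hΩ.frontier_eq ▸ hζ).2 (h ▸ hx')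
  have hval : ‖ζ - x'‖ * Real.exp (2 * π * H ζ x') = 1 := by
    rw [hbdry ζ hζ, ← mul_assoc, mul_one_div_cancel Real.two_pi_pos.ne', one_mul,
      Real.exp_log (one_div_pos.2 hζx'), mul_one_div_cancel hζx'.ne']
  have hH' : Tendsto (fun y => H y x') (𝓝[Ω] ζ) (𝓝 (H ζ x')) :=
    (hcont ζ (frontier_subset_closure hζ)).mono_left (nhdsWithin_mono ζ subset_closure)
  have hnorm : Tendsto (fun y => ‖y - x'‖) (𝓝[Ω] ζ) (𝓝 ‖ζ - x'‖) :=
    (continuous_id.sub continuous_const).norm.continuousWithinAt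
  exact hval ▸ hnorm.mul (hH'.const_mul (2 * π)).rexp

theorem exists_greenSystem (hH : IsGreenRegularPart Ω H) (hΩ : IsOpen Ω)
    (hb : Bornology.IsBounded Ω) (hc : Convex ℝ Ω) :
    ∃ E : ℂ → ℂ → ℂ, GreenSystem (planeEquiv ⁻¹' Ω) E ∧
      ∀ b ∈ planeEquiv ⁻¹' Ω, ∀ z ∈ planeEquiv ⁻¹' Ω,
        ‖E b z‖ = Real.exp (2 * π * H (planeEquiv z) (planeEquiv b)) := by
  let U := planeEquiv ⁻¹' Ω
  have hU : IsOpen U := hΩ.preimage planeEquiv.continuous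
  have hUc : Convex ℝ U := convex_preimage_planeEquiv hc
  have hex : ∀ b ∈ U, ∃ F : ℂ → ℂ, DifferentiableOn ℂ F U ∧
      ∀ z ∈ U, ‖F z‖ = Real.exp (2 * π * H (planeEquiv z) (planeEquiv b)) := fun b hb =>
    exists_differentiableOn_norm_eq_exp_of_harmonicOnNhd hU hUc
      ((harmonicOnNhd_comp_planeEquiv hΩ (hH _ hb).1 (hH _ hb).2.1).const_smul (c := 2 * π))
  choose! E hE using hex
  refine ⟨E, ⟨hU, planeEquiv.antilipschitz.isBounded_preimage hb, hUc.isPreconnected,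
    fun hb => (hE _ hb).1, fun hb hz => ?_, fun {b ζ} hb hζ => ?_⟩, fun b hb => (hE b hb).2⟩
  · rw [← norm_pos_iff, (hE _ hb).2 _ hz]
    exact Real.exp_pos _
  · have hζ' : planeEquiv ζ ∈ frontier Ω :=
      (planeEquiv.toHomeomorph.preimage_frontier Ω).symm.subset hζ
    have hlim := (hH.tendsto_norm_sub_mul_exp hΩ hb hζ').comp
      (planeEquiv.continuous.continuousWithinAt.tendsto_nhdsWithin (mapsTo_preimage _ _))
    refine hlim.congr' (eventually_nhdsWithin_of_forall fun z hz => ?_)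
    simp only [Function.comp_apply]
    rw [greenMap, norm_mul, (hE b hb).2 z hz, ← map_sub, planeEquiv.norm_map]

theorem differentiableAt_and_fderiv_greenOfRegularPart_pos (hH : IsGreenRegularPart Ω H)
    (hΩ : IsOpen Ω) (hb : Bornology.IsBounded Ω) (hc : Convex ℝ Ω) {x y P : E2} (hx : x ∈ Ω)
    (hy : y ∈ Ω) (hxy : x ≠ y) (hP : P ∈ Ω) :
    DifferentiableAt ℝ (Function.uncurry (greenOfRegularPart H)) (x, y) ∧
      0 < fderiv ℝ (Function.uncurry (greenOfRegularPart H)) (x, y) (P - x, P - y) := by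
  obtain ⟨E, S, hE⟩ := hH.exists_greenSystem hΩ hb hc
  obtain ⟨a, rfl⟩ := planeEquiv.surjective x
  obtain ⟨b, rfl⟩ := planeEquiv.surjective y
  obtain ⟨Q, rfl⟩ := planeEquiv.surjective P
  have hab : a ≠ b := fun h => hxy (congrArg _ h)
  let e : (ℂ × ℂ) ≃L[ℝ] E2 × E2 :=
    planeEquiv.toContinuousLinearEquiv.prodCongr planeEquiv.toContinuousLinearEquiv
  have hlog := (S.differentiableAt_log_norm_greenMap hx hy hab).hasFDerivAt.const_mul
    (-(1 / (2 * π)))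
  have heq : Function.uncurry (greenOfRegularPart H) ∘ e =ᶠ[𝓝 (a, b)]
      fun p => -(1 / (2 * π)) * Real.log ‖greenMap E p.2 p.1‖ := by
    filter_upwards [prod_mem_nhds (S.isOpen.mem_nhds hx) (S.isOpen.mem_nhds hy),
      (isOpen_ne_fun continuous_fst continuous_snd).mem_nhds hab] with p hp hne
    exact greenOfRegularPart_planeEquiv hne (hE p.2 hp.2 p.1 hp.1)
  have he : e (a, b) = (planeEquiv a, planeEquiv b) := rfl
  have hG := e.comp_right_hasFDerivAt_iff'.1 (hlog.congr_of_eventuallyEq heq)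
  rw [he] at hG
  refine ⟨hG.differentiableAt, ?_⟩
  have hneg := S.fderiv_log_norm_greenMap_neg (convex_preimage_planeEquiv hc) hx hy hab hP
  have hsymm : e.symm (planeEquiv Q - planeEquiv a, planeEquiv Q - planeEquiv b) =
      (Q - a, Q - b) := e.symm_apply_eq.2 (by simp [e])
  rw [hG.fderiv, ContinuousLinearMap.comp_apply, ContinuousLinearEquiv.coe_coe, hsymm, smul_apply]
  exact mul_pos_of_neg_of_neg (neg_lt_zero.2 (one_div_pos.2 Real.two_pi_pos)) hneg

theorem differentiableAt_and_fderiv_self_nonpos (hH : IsGreenRegularPart Ω H)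
    (hΩ : IsOpen Ω) (hb : Bornology.IsBounded Ω) (hc : Convex ℝ Ω) {x P : E2} (hx : x ∈ Ω)
    (hP : P ∈ Ω) (h : H P P ≤ H x x) :
    DifferentiableAt ℝ (fun y => H y y) x ∧ fderiv ℝ (fun y => H y y) x (P - x) ≤ 0 := by
  obtain ⟨E, S, hE⟩ := hH.exists_greenSystem hΩ hb hc
  obtain ⟨a, rfl⟩ := planeEquiv.surjective x
  obtain ⟨Q, rfl⟩ := planeEquiv.surjective P
  let e := planeEquiv.toContinuousLinearEquiv
  have hEQ : ‖E Q Q‖ ≤ ‖E a a‖ := by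
    rw [hE Q hP Q hP, hE a hx a hx]
    gcongr
  have heq : (fun y => H y y) ∘ e =ᶠ[𝓝 a] fun z => 1 / (2 * π) * Real.log ‖E z z‖ := by
    filter_upwards [S.isOpen.mem_nhds hx] with z hz
    rw [hE z hz z hz, Real.log_exp, ← mul_assoc, one_div_mul_cancel Real.two_pi_pos.ne', one_mul]
    rfl
  have hlog := (S.differentiableAt_log_norm_apply_self hx).hasFDerivAt.const_mul (1 / (2 * π))
  have hφ : HasFDerivAt (fun y => H y y) _ (planeEquiv a) :=
    e.comp_right_hasFDerivAt_iff'.1 (hlog.congr_of_eventuallyEq heq)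
  refine ⟨hφ.differentiableAt, ?_⟩
  have hsymm : e.symm (planeEquiv Q - planeEquiv a) = Q - a := e.symm_apply_eq.2 (by simp [e])
  rw [hφ.fderiv, ContinuousLinearMap.comp_apply, ContinuousLinearEquiv.coe_coe, hsymm, smul_apply]
  exact mul_nonpos_of_nonneg_of_nonpos (one_div_pos.2 Real.two_pi_pos).le
    (S.fderiv_log_norm_apply_self_nonpos (convex_preimage_planeEquiv hc) hx hP hEQ)

end IsGreenRegularPart

end GreenFunction

section KirchhoffRouth

variable {V ι : Type*} [Fintype ι] [DecidableEq ι]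

/-- The Kirchhoff–Routh function of vortices with strengths `κ` at positions `x`, for an arbitrary
Green function `G` and Robin function `φ`. -/
def kirchhoffRouth (G : V → V → ℝ) (φ : V → ℝ) (κ : ι → ℝ) (x : ι → V) : ℝ :=
  -(∑ i, ∑ j ∈ Finset.univ.filter (fun j => j ≠ i), κ i * κ j * G (x i) (x j)) +
    ∑ i, κ i ^ 2 * φ (x i)

variable [NormedAddCommGroup V] [NormedSpace ℝ V] {G : V → V → ℝ} {φ : V → ℝ} {κ : ι → ℝ}
  {x : ι → V}

theorem fderiv_kirchhoffRouth_apply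
    (hG : ∀ i j, j ≠ i → DifferentiableAt ℝ (Function.uncurry G) (x i, x j))
    (hφ : ∀ i, DifferentiableAt ℝ φ (x i)) (d : ι → V) :
    fderiv ℝ (kirchhoffRouth G φ κ) x d =
      -(∑ i, ∑ j ∈ Finset.univ.filter (fun j => j ≠ i),
          κ i * κ j * fderiv ℝ (Function.uncurry G) (x i, x j) (d i, d j)) +
        ∑ i, κ i ^ 2 * fderiv ℝ φ (x i) (d i) := by
  have hpair : ∀ i j, j ≠ i → HasFDerivAt (fun y : ι → V => G (y i) (y j))
      ((fderiv ℝ (Function.uncurry G) (x i, x j)).comp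
        ((ContinuousLinearMap.proj (R := ℝ) (φ := fun _ : ι => V) i).prod
          (ContinuousLinearMap.proj j))) x := fun i j hij =>
    HasFDerivAt.comp x (g := Function.uncurry G) (hG i j hij).hasFDerivAt
      ((hasFDerivAt_apply (𝕜 := ℝ) i x).prodMk (hasFDerivAt_apply j x))
  have hself : ∀ i, HasFDerivAt (fun y : ι → V => φ (y i))
      ((fderiv ℝ φ (x i)).comp (ContinuousLinearMap.proj i)) x := fun i =>
    (hφ i).hasFDerivAt.comp x (hasFDerivAt_apply i x)
  have hW := (HasFDerivAt.fun_sum fun i (_ : i ∈ Finset.univ) =>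
    HasFDerivAt.fun_sum fun j (hj : j ∈ Finset.univ.filter fun j => j ≠ i) =>
      (hpair i j (Finset.mem_filter.1 hj).2).const_mul (κ i * κ j)).fun_neg.fun_add
    (HasFDerivAt.fun_sum fun i (_ : i ∈ Finset.univ) => (hself i).const_mul (κ i ^ 2))
  rw [HasFDerivAt.fderiv (f := kirchhoffRouth G φ κ) hW]
  simp

theorem fderiv_kirchhoffRouth_neg [Nontrivial ι] (hκ : ∀ i, 0 < κ i) {d : ι → V}
    (hG : ∀ i j, j ≠ i → DifferentiableAt ℝ (Function.uncurry G) (x i, x j))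
    (hφ : ∀ i, DifferentiableAt ℝ φ (x i))
    (hGd : ∀ i j, j ≠ i → 0 < fderiv ℝ (Function.uncurry G) (x i, x j) (d i, d j))
    (hφd : ∀ i, fderiv ℝ φ (x i) (d i) ≤ 0) : fderiv ℝ (kirchhoffRouth G φ κ) x d < 0 := by
  have hpairs : 0 < ∑ i, ∑ j ∈ Finset.univ.filter (fun j => j ≠ i),
      κ i * κ j * fderiv ℝ (Function.uncurry G) (x i, x j) (d i, d j) := by
    refine Finset.sum_pos (fun i _ => Finset.sum_pos (fun j hj => ?_) ?_) Finset.univ_nonempty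
    · exact mul_pos (mul_pos (hκ i) (hκ j)) (hGd i j (Finset.mem_filter.1 hj).2)
    · obtain ⟨j, hj⟩ := exists_ne i
      exact ⟨j, Finset.mem_filter.2 ⟨Finset.mem_univ j, hj⟩⟩
  have hselfs : ∑ i, κ i ^ 2 * fderiv ℝ φ (x i) (d i) ≤ 0 :=
    Finset.sum_nonpos fun i _ => mul_nonpos_of_nonneg_of_nonpos (sq_nonneg _) (hφd i)
  rw [fderiv_kirchhoffRouth_apply hG hφ]
  linarith

end KirchhoffRouth

end

/-- Grossi–Takahashi: on a bounded convex planar domain the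
Kirchhoff–Routh function with `k ≥ 2` vortices of positive strengths has no critical point. -/
theorem stmt10 (Ω : Set E2) (hΩo : IsOpen Ω) (hΩne : Ω.Nonempty)
    (hΩb : Bornology.IsBounded Ω) (hconv : Convex ℝ Ω)
    (H : E2 → E2 → ℝ)
    (hH : ∀ x' ∈ Ω, ContDiffOn ℝ 2 (fun y => H y x') Ω ∧
      (∀ y ∈ Ω, lap (fun y => H y x') y = 0) ∧
      ContinuousOn (fun y => H y x') (closure Ω) ∧
      (∀ y ∈ frontier Ω, H y x' = (1 / (2 * π)) * Real.log (1 / ‖y - x'‖)))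
    (G : E2 → E2 → ℝ)
    (hG : ∀ x x' : E2, G x x' = (1 / (2 * π)) * Real.log (1 / ‖x - x'‖) - H x x')
    (k : ℕ) (hk : 2 ≤ k) (κ : Fin k → ℝ) (hκ : ∀ j, 0 < κ j)
    (W : (Fin k → E2) → ℝ)
    (hW : ∀ x : Fin k → E2,
      W x = -(∑ i : Fin k, ∑ j ∈ Finset.univ.filter (fun j => j ≠ i),
              κ i * κ j * G (x i) (x j))
            + ∑ i : Fin k, (κ i) ^ 2 * H (x i) (x i)) :
    ¬ ∃ x : Fin k → E2, (∀ j, x j ∈ Ω) ∧ Function.Injective x ∧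
        fderiv ℝ W x = 0 := by
  rintro ⟨x, hx, hinj, hcrit⟩
  have hreg : IsGreenRegularPart Ω H := hH
  obtain rfl : greenOfRegularPart H = G := funext₂ fun y y' => (hG y y').symm
  obtain rfl : kirchhoffRouth (greenOfRegularPart H) (fun y => H y y) κ = W :=
    funext fun y => (hW y).symm
  have : Nontrivial (Fin k) := Fin.nontrivial_iff_two_le.2 hk
  obtain ⟨m, hm⟩ := Finite.exists_min fun i => H (x i) (x i)
  have hpair := fun i j (hij : j ≠ i) =>
    hreg.differentiableAt_and_fderiv_greenOfRegularPart_pos hΩo hΩb hconv (hx i) (hx j)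
      (hinj.ne hij.symm) (hx m)
  have hself := fun i =>
    hreg.differentiableAt_and_fderiv_self_nonpos hΩo hΩb hconv (hx i) (hx m) (hm i)
  have hneg := fderiv_kirchhoffRouth_neg hκ (d := fun i => x m - x i)
    (fun i j hij => (hpair i j hij).1) (fun i => (hself i).1)
    (fun i j hij => (hpair i j hij).2) (fun i => (hself i).2)
  simp [hcrit] at hneg
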